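/- Let β > 0, τ ∈ (0, β²), let φ: ℝ → ℝ≥0 be convex, non-increasing and τ-discrepant, and suppose (1+β²)τ/(β²−τ) ≤ U* ≤ 1 and 0 < u ≤ 1. Fix m > 0 with φ'(m) ≤ 0, φ'(−m) < 0. Then (1+β²)φ'(−m)U* − (1+β²)φ'(m)u − (φ'(m)+φ'(−m))U*·u ≤ 0. -/

import Mathlib

/-- sign computation at the heart of the F_β-calibration proof (case 1). -/
theorem fbeta_calibration_case1
    (β τ : ℝ) (hβ : 0 < β) (hτ0 : 0 < τ) (hτβ : τ < β ^ 2)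
    (φ φ' : ℝ → ℝ) (hφnn : ∀ t, 0 ≤ φ t)
    (hconv : ConvexOn ℝ Set.univ φ) (hanti : Antitone φ)
    (hderiv : ∀ t ≠ (0 : ℝ), HasDerivAt φ (φ' t) t)
    (Ustar u : ℝ)
    (hU1 : (1 + β ^ 2) * τ / (β ^ 2 - τ) ≤ Ustar) (hU2 : Ustar ≤ 1)
    (hu0 : 0 < u) (hu1 : u ≤ 1)
    (m : ℝ) (hm : 0 < m) (hpos : φ' m ≤ 0) (hneg : φ' (-m) < 0)
    (hdisc : τ * φ' (-m) ≤ φ' m) :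
    (1 + β ^ 2) * φ' (-m) * Ustar - (1 + β ^ 2) * φ' m * u
      - (φ' m + φ' (-m)) * Ustar * u ≤ 0 := by
  have hd : 0 < β ^ 2 - τ := by linarith
  have hB : 0 < 1 + β ^ 2 := by positivity
  have hU0 : 0 < Ustar := lt_of_lt_of_le (by positivity) hU1
  have h1 : (1 + β ^ 2) * τ ≤ Ustar * (β ^ 2 - τ) := (div_le_iff₀ hd).mp hU1
  have h2 : τ * (1 + β ^ 2 + Ustar) ≤ Ustar * β ^ 2 := by linarith
  have h3 : β ^ 2 * u ≤ 1 + β ^ 2 - u := by nlinarith [sq_nonneg β]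
  have h4 : u * (τ * (1 + β ^ 2 + Ustar)) ≤ Ustar * (1 + β ^ 2 - u) := by
    have ha := mul_le_mul_of_nonneg_left h2 hu0.le
    have hb := mul_le_mul_of_nonneg_left h3 hU0.le
    linarith
  have h5 := mul_le_mul_of_nonpos_left h4 hneg.le
  have h6 := mul_le_mul_of_nonneg_right hdisc
    (by positivity : 0 ≤ u * (1 + β ^ 2 + Ustar))
  linarith
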